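/- arXiv:1107.0557 — 2 statements merged into one kernel-verified Lean document; each statement's English description precedes it below -/
import Mathlib

section
/- Let L be a right R-module of projective dimension at most 1 and K a finitely presented submodule of L, and set M = L/K. Then Ext¹_R(M, −) preserves direct sums of copies of R if and only if M is an fp-Ω¹-module (i.e., there is an exact sequence 0 → U → Q → M → 0 with Q projective and U finitely presented). -/
open CategoryTheory CategoryTheory.Limits Opposite

noncomputable section

/-- The category of right `R`-modules. -/
abbrev RMod (R : Type) [Ring R] := ModuleCat.{0} Rᵐᵒᵖ

/-- `R` as a right module over itself. -/
abbrev regR (R : Type) [Ring R] : RMod R := ModuleCat.of Rᵐᵒᵖ R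

/-- The covariant functor `Ext¹_R(M, -)` (more generally `Extⁿ_R(M, -)`). -/
abbrev extFun (R : Type) [Ring R] (n : ℕ) (M : RMod R) : RMod R ⥤ ModuleCat ℤ :=
  (Ext ℤ (RMod R) n).obj (op M)

/-- `Ext¹_R(M,-)` commutes with direct limits (direct systems over directed sets). -/
def CommutesWithDirectLimits (R : Type) [Ring R] (M : RMod R) : Prop :=
  ∀ (J : Type) [Preorder J] [IsDirected J (· ≤ ·)] [Nonempty J],
    PreservesColimitsOfShape J (extFun R 1 M)

/-- `Ext¹_R(M,-)` commutes with direct sums. -/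
def CommutesWithDirectSums (R : Type) [Ring R] (M : RMod R) : Prop :=
  ∀ (ι : Type), PreservesColimitsOfShape (Discrete ι) (extFun R 1 M)

/-- `Extⁿ_R(M,-)` commutes with direct sums of copies of `R`: the canonical map
`Extⁿ_R(M,R)^{(ι)} → Extⁿ_R(M,R^{(ι)})` is an isomorphism for every index set `ι`. -/
def CommutesWithSumsOfR (R : Type) [Ring R] (n : ℕ) (M : RMod R) : Prop :=
  ∀ (ι : Type), IsIso (Sigma.desc
    (fun i : ι => (extFun R n M).map (Sigma.ι (fun _ : ι => regR R) i)))

/-- A module `K` is small iff `Hom_R(K,-)` commutes with direct sums. -/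
def IsSmallModule (R : Type) [Ring R] (K : RMod R) : Prop :=
  ∀ (ι : Type), PreservesColimitsOfShape (Discrete ι) (preadditiveCoyoneda.obj (op K))

/-- `M` has a short exact sequence `0 → K → P → M → 0` with `P` projective and `K`
satisfying the property `Q` (e.g. `M` is fp-Ω¹, fg-Ω¹ or small-Ω¹). -/
def IsOmega1 (R : Type) [Ring R] (Q : RMod R → Prop) (M : RMod R) : Prop :=
  ∃ (K P : RMod R) (i : K ⟶ P) (p : P ⟶ M) (w : i ≫ p = 0),
    Mono i ∧ Epi p ∧ (ShortComplex.mk i p w).Exact ∧ Projective P ∧ Q K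

/-- `M` has projective dimension at most 1. -/
def HasProjDimLE1 (R : Type) [Ring R] (M : RMod R) : Prop :=
  ∃ (P₁ P₀ : RMod R) (f : P₁ ⟶ P₀) (p : P₀ ⟶ M) (w : f ≫ p = 0),
    Projective P₁ ∧ Projective P₀ ∧ Mono f ∧ Epi p ∧ (ShortComplex.mk f p w).Exact

/-- `M` is `FP₂`: it admits a projective resolution which is finitely generated in
dimensions `0`, `1` and `2`. -/
def IsFP2 (R : Type) [Ring R] (M : RMod R) : Prop :=
  ∃ (P₂ P₁ P₀ : RMod R) (d₂ : P₂ ⟶ P₁) (d₁ : P₁ ⟶ P₀) (p : P₀ ⟶ M)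
    (w₂ : d₂ ≫ d₁ = 0) (w₁ : d₁ ≫ p = 0),
    Projective P₂ ∧ Projective P₁ ∧ Projective P₀ ∧
    Module.Finite Rᵐᵒᵖ P₂ ∧ Module.Finite Rᵐᵒᵖ P₁ ∧ Module.Finite Rᵐᵒᵖ P₀ ∧
    Epi p ∧ (ShortComplex.mk d₂ d₁ w₂).Exact ∧ (ShortComplex.mk d₁ p w₁).Exact

/-- `M` has injective dimension at most `n`, i.e. `Ext^k(-,M)` vanishes for `k > n`. -/
def HasInjDimLE (R : Type) [Ring R] (n : ℕ) (M : RMod R) : Prop :=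
  ∀ (k : ℕ), n < k → ∀ (N : RMod R), IsZero (((Ext ℤ (RMod R) k).obj (op N)).obj M)

/-!
For a projective presentation `0 → U → P → M → 0` the group `Ext¹(M, -)` is the cokernel of
`Hom(P, -) → Hom(U, -)`. Hence `Ext¹(M, -)` preserves direct sums of copies of `R` if and only if
every homomorphism `U → R^(I)` extends to `P` after finitely many summands have been discarded.
If `U` is finitely generated, one discards the finitely many summands that meet its image.

Conversely, the syzygy `U` of `L/K` in a projective `P → L → L/K` is an extension of `K` by a
projective module, so after adding a projective summand to both `U` and `P` it has the form
`R^(I)/N` with `N` finitely generated. The projection of `R^(I)` that kills the finitely many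
coordinates occurring in `N` descends to `U`, and after discarding finitely many more coordinates
it extends to some `g : P → R^(J)`. As `U → R^(J)` is surjective, `ker g` is a projective module
that still maps onto `L/K`. The new syzygy is the kernel of `U → R^(J)`, a quotient of a finitely
generated projective module by `N`.
-/

universe u v

section Factorization

variable {S : Type*} [Ring S] {X Y Z : Type*} [AddCommGroup X] [Module S X] [AddCommGroup Y]
  [Module S Y] [AddCommGroup Z] [Module S Z]

lemma exists_comp_eq_of_range_le {i : Y →ₗ[S] Z} (hi : Function.Injective i) {f : X →ₗ[S] Z}
    (h : LinearMap.range f ≤ LinearMap.range i) : ∃ g : X →ₗ[S] Y, i ∘ₗ g = f :=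
  ⟨(LinearEquiv.ofInjective i hi).symm.toLinearMap ∘ₗ
      f.codRestrict (LinearMap.range i) fun x => h ⟨x, rfl⟩,
    LinearMap.ext fun _ => congrArg Subtype.val
      ((LinearEquiv.ofInjective i hi).apply_symm_apply _)⟩

lemma exists_comp_eq_of_ker_le {φ : X →ₗ[S] Y} (hφ : Function.Surjective φ) {f : X →ₗ[S] Z}
    (h : LinearMap.ker φ ≤ LinearMap.ker f) : ∃ g : Y →ₗ[S] Z, g ∘ₗ φ = f :=
  ⟨(LinearMap.ker φ).liftQ f h ∘ₗ (φ.quotKerEquivOfSurjective hφ).symm.toLinearMap,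
    LinearMap.ext fun x => by
      have : (φ.quotKerEquivOfSurjective hφ).symm (φ x) = (LinearMap.ker φ).mkQ x := by
        rw [LinearEquiv.symm_apply_eq]; rfl
      simp [this]⟩

lemma projective_ker [Module.Projective S X] [Module.Projective S Y] {f : X →ₗ[S] Y}
    (hf : Function.Surjective f) : Module.Projective S (LinearMap.ker f) := by
  obtain ⟨σ, hσ⟩ := Module.projective_lifting_property f LinearMap.id hf
  have hσ (y) : f (σ y) = y := LinearMap.congr_fun hσ y
  refine .of_split (LinearMap.ker f).subtype
    ((LinearMap.id - σ ∘ₗ f).codRestrict _ fun x => by simp [hσ]) ?_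
  ext x
  simp [LinearMap.mem_ker.1 x.2]

end Factorization

section Finsupp

variable {S ι A : Type*} [Ring S] [AddCommGroup A] [Module S A]

lemma exists_finset_le_supported_of_fg {N : Submodule S (ι →₀ A)} (hN : N.FG) :
    ∃ s : Finset ι, N ≤ Finsupp.supported A S (s : Set ι) := by
  classical
  obtain ⟨t, rfl⟩ := hN
  refine ⟨t.biUnion Finsupp.support, Submodule.span_le.2 fun x hx => ?_⟩
  simp only [SetLike.mem_coe, Finsupp.mem_supported]
  exact_mod_cast Finset.subset_biUnion_of_mem Finsupp.support hx

lemma ker_lsubtypeDomain_compl (s : Set ι) :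
    LinearMap.ker (Finsupp.lsubtypeDomain sᶜ : (ι →₀ A) →ₗ[S] _) = Finsupp.supported A S s := by
  ext x
  simp [Finsupp.mem_supported', Finsupp.ext_iff, Finsupp.lsubtypeDomain_apply]

lemma lsubtypeDomain_surjective (s : Set ι) :
    Function.Surjective (Finsupp.lsubtypeDomain s : (ι →₀ A) →ₗ[S] _) := by
  classical
  exact fun x => ⟨x.extendDomain, Finsupp.subtypeDomain_extendDomain x⟩

lemma ker_lsubtypeDomain_compl_fg [Module.Finite S A] (s : Finset ι) :
    (LinearMap.ker (Finsupp.lsubtypeDomain (s : Set ι)ᶜ : (ι →₀ A) →ₗ[S] _)).FG := by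
  rw [ker_lsubtypeDomain_compl, ← Module.Finite.iff_fg]
  exact Module.Finite.equiv (Finsupp.supportedEquivFinsupp (s : Set ι)).symm

end Finsupp

/-- A projective presentation of `M` with syzygy `U`: the sequence `0 → U → P → M → 0` given by
`i` and `p` is exact and `P` is projective. -/
structure IsProjectivePresentation {S U P M : Type*} [Ring S] [AddCommGroup U] [Module S U]
    [AddCommGroup P] [Module S P] [AddCommGroup M] [Module S M]
    (i : U →ₗ[S] P) (p : P →ₗ[S] M) : Prop where
  projective : Module.Projective S P
  injective : Function.Injective i
  exact : Function.Exact i p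
  surjective : Function.Surjective p

namespace IsProjectivePresentation

variable {S : Type*} [Ring S] {U P M X : Type*} [AddCommGroup U] [Module S U]
  [AddCommGroup P] [Module S P] [AddCommGroup M] [Module S M] [AddCommGroup X] [Module S X]
  {i : U →ₗ[S] P} {p : P →ₗ[S] M}

lemma exists_comp_eq (h : IsProjectivePresentation i p) {f : X →ₗ[S] P} (hf : ∀ x, p (f x) = 0) :
    ∃ g : X →ₗ[S] U, i ∘ₗ g = f :=
  exists_comp_eq_of_range_le h.injective <| by
    rintro _ ⟨x, rfl⟩
    exact (h.exact _).1 (hf x)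

lemma prodMap_id [Module.Projective S X] (h : IsProjectivePresentation i p) :
    IsProjectivePresentation (i.prodMap (LinearMap.id : X →ₗ[S] X)) (p ∘ₗ LinearMap.fst S P X) where
  projective := have := h.projective; inferInstance
  injective := h.injective.prodMap Function.injective_id
  exact := fun ⟨y, x⟩ => by simp [h.exact y]
  surjective := h.surjective.comp Prod.fst_surjective

lemma restrict_ker {F : Type*} [AddCommGroup F] [Module S F] [Module.Projective S F]
    (h : IsProjectivePresentation i p) (g : P →ₗ[S] F) (hg : Function.Surjective (g ∘ₗ i)) :
    IsProjectivePresentation (i.restrict (p := LinearMap.ker (g ∘ₗ i)) (q := LinearMap.ker g)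
      fun _ hx => hx) (p.domRestrict (LinearMap.ker g)) := by
  have := h.projective
  obtain ⟨σ, hσ⟩ := Module.projective_lifting_property (g ∘ₗ i) LinearMap.id hg
  have hσ (x) : g (i (σ x)) = x := LinearMap.congr_fun hσ x
  refine ⟨projective_ker (.of_comp (g := i) hg), ?_, ?_, fun m => ?_⟩
  · exact fun x y hxy => Subtype.ext (h.injective (congrArg Subtype.val hxy))
  · rintro ⟨x, hx⟩
    refine (h.exact x).trans ⟨?_, ?_⟩
    · rintro ⟨u, rfl⟩
      exact ⟨⟨u, hx⟩, rfl⟩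
    · rintro ⟨u, hu⟩
      exact ⟨u, congrArg Subtype.val hu⟩
  · obtain ⟨x, rfl⟩ := h.surjective m
    exact ⟨⟨x - i (σ (g x)), by simp [hσ]⟩, by simp [h.exact.apply_apply_eq_zero]⟩

end IsProjectivePresentation

lemma exists_finsupp_equiv_prod (S : Type u) [Ring S] (F : Type v) [AddCommGroup F] [Module S F]
    [Module.Projective S F] :
    ∃ (X : Type max u v) (_ : AddCommGroup X) (_ : Module S X),
      Module.Projective S X ∧ Nonempty ((F →₀ S) ≃ₗ[S] F × X) := by
  let c : (F →₀ S) →ₗ[S] F := Finsupp.linearCombination S id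
  have hc : Function.Surjective c := Finsupp.linearCombination_id_surjective S F
  obtain ⟨σ, hσ⟩ := Module.projective_lifting_property c LinearMap.id hc
  have hexact : Function.Exact (LinearMap.ker c).subtype c := LinearMap.exact_subtype_ker_map c
  obtain ⟨e, -⟩ :=
    hexact.splitSurjectiveEquiv (M := LinearMap.ker c) Subtype.val_injective ⟨σ, hσ⟩
  exact ⟨LinearMap.ker c, _, _, projective_ker hc, ⟨e.trans (LinearEquiv.prodComm S _ _)⟩⟩

section FinitelyRelated

/-- A finitely related module, here a quotient of a projective (rather than free) module by a
finitely generated submodule. -/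
def IsFinitelyRelated (S : Type u) [Ring S] (U : Type u) [AddCommGroup U] [Module S U] : Prop :=
  ∃ (F : Type u) (_ : AddCommGroup F) (_ : Module S F) (φ : F →ₗ[S] U),
    Module.Projective S F ∧ Function.Surjective φ ∧ (LinearMap.ker φ).FG

namespace IsFinitelyRelated

variable {S : Type u} [Ring S] {U K A : Type u} [AddCommGroup U] [Module S U] [AddCommGroup K]
  [Module S K] [AddCommGroup A] [Module S A]

lemma of_finitePresentation [Module.FinitePresentation S U] : IsFinitelyRelated S U := by
  obtain ⟨n, φ, hφ⟩ := Module.Finite.exists_fin' S U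
  exact ⟨_, _, _, φ, inferInstance, hφ, Module.FinitePresentation.fg_ker φ hφ⟩

lemma of_projective [Module.Projective S U] : IsFinitelyRelated S U :=
  ⟨U, _, _, LinearMap.id, inferInstance, Function.surjective_id, by simpa using Submodule.fg_bot⟩

lemma of_exact {i : A →ₗ[S] U} {q : U →ₗ[S] K} (hA : IsFinitelyRelated S A)
    (hK : IsFinitelyRelated S K) (hi : Function.Injective i) (hex : Function.Exact i q)
    (hq : Function.Surjective q) : IsFinitelyRelated S U := by
  obtain ⟨F, _, _, φ, _, hφ, hφker⟩ := hA
  obtain ⟨G, _, _, ψ, _, hψ, hψker⟩ := hK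
  obtain ⟨ψ', hψ'⟩ := Module.projective_lifting_property q ψ hq
  have hψ' (x) : q (ψ' x) = ψ x := LinearMap.congr_fun hψ' x
  let χ := (i ∘ₗ φ).coprod ψ'
  have hqχ (x) : q (χ x) = ψ x.2 := by simp [χ, hψ', hex.apply_apply_eq_zero]
  refine ⟨F × G, _, _, χ, inferInstance, fun u => ?_, ?_⟩
  · obtain ⟨y, hy⟩ := hψ (q u)
    obtain ⟨a, ha⟩ := (hex (u - ψ' y)).1 (by rw [map_sub, hψ', hy, sub_self])
    obtain ⟨x, rfl⟩ := hφ a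
    exact ⟨(x, y), by simp [χ, ha]⟩
  · have hmap : (LinearMap.ker χ).map (LinearMap.snd S F G) = LinearMap.ker ψ := by
      ext y
      refine ⟨?_, fun hy => ?_⟩
      · rintro ⟨x, hx, rfl⟩
        simpa [hqχ] using congrArg q (LinearMap.mem_ker.1 hx)
      · obtain ⟨a, ha⟩ := (hex (ψ' y)).1 (by rw [hψ', hy])
        obtain ⟨x, rfl⟩ := hφ a
        exact ⟨(-x, y), by simp [χ, ha], rfl⟩
    have hinf : LinearMap.ker χ ⊓ LinearMap.ker (LinearMap.snd S F G) =
        (LinearMap.ker φ).map (LinearMap.inl S F G) := by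
      ext ⟨x, y⟩
      simp only [Submodule.mem_inf, Submodule.mem_map, LinearMap.mem_ker]
      constructor
      · rintro ⟨hx, rfl : y = 0⟩
        exact ⟨x, hi (by simpa [χ] using hx), rfl⟩
      · rintro ⟨x', hx', h⟩
        obtain ⟨rfl, rfl⟩ := Prod.ext_iff.1 h
        simp [χ, hx']
    exact Submodule.fg_of_fg_map_of_fg_inf_ker _ (hmap ▸ hψker) (hinf ▸ hφker.map _)

lemma exists_free_cover_prod (hU : IsFinitelyRelated S U) :
    ∃ (X : Type u) (_ : AddCommGroup X) (_ : Module S X) (ι : Type u)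
      (φ : (ι →₀ S) →ₗ[S] U × X),
      Module.Projective S X ∧ Function.Surjective φ ∧ (LinearMap.ker φ).FG := by
  obtain ⟨F, _, _, φ, _, hφ, hker⟩ := hU
  obtain ⟨X, _, _, _, ⟨e⟩⟩ := exists_finsupp_equiv_prod S F
  let ψ := φ.prodMap (LinearMap.id : X →ₗ[S] X)
  have hψker : (LinearMap.ker ψ).FG := by
    rw [LinearMap.ker_prodMap, LinearMap.ker_id]
    exact hker.prod Submodule.fg_bot
  exact ⟨X, _, _, F, ψ ∘ₗ e.toLinearMap, inferInstance,
    (hφ.prodMap Function.surjective_id).comp e.surjective,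
    Submodule.fg_ker_comp _ _ (e.ker ▸ Submodule.fg_bot) hψker e.surjective⟩

end IsFinitelyRelated

end FinitelyRelated

section ExtendsModFinite

/-- Along `i : U → P`, every homomorphism from `U` to a direct sum of copies of `A` extends to `P`
after finitely many of the summands have been discarded. -/
def ExtendsModFinite {S : Type*} [Ring S] (A : Type*) [AddCommGroup A] [Module S A]
    {U P : Type*} [AddCommGroup U] [Module S U] [AddCommGroup P] [Module S P]
    (i : U →ₗ[S] P) : Prop :=
  ∀ (ι : Type u) (f : U →ₗ[S] ι →₀ A), ∃ (s : Finset ι) (g : P →ₗ[S] ((s : Set ι)ᶜ : Set ι) →₀ A),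
    g ∘ₗ i = Finsupp.lsubtypeDomain (s : Set ι)ᶜ ∘ₗ f

namespace ExtendsModFinite

variable {S : Type*} [Ring S] {A B U P U' P' M : Type*} [AddCommGroup A] [Module S A]
  [AddCommGroup B] [Module S B] [AddCommGroup U] [Module S U] [AddCommGroup P] [Module S P]
  [AddCommGroup U'] [Module S U'] [AddCommGroup P'] [Module S P'] [AddCommGroup M] [Module S M]
  {i : U →ₗ[S] P} {p : P →ₗ[S] M} {i' : U' →ₗ[S] P'} {p' : P' →ₗ[S] M}

lemma of_equiv (e : A ≃ₗ[S] B) (h : ExtendsModFinite.{u} A i) : ExtendsModFinite.{u} B i := by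
  intro ι f
  obtain ⟨s, g, hg⟩ := h ι (Finsupp.mapRange.linearMap e.symm.toLinearMap ∘ₗ f)
  refine ⟨s, Finsupp.mapRange.linearMap e.toLinearMap ∘ₗ g, LinearMap.ext fun x => ?_⟩
  ext a
  have := congrArg e (DFunLike.congr_fun (LinearMap.congr_fun hg x) a)
  simpa [Finsupp.lsubtypeDomain_apply] using this

lemma of_finite [Module.Finite S U] (i : U →ₗ[S] P) : ExtendsModFinite.{u} A i := by
  intro ι f
  obtain ⟨s, hs⟩ := exists_finset_le_supported_of_fg (Module.Finite.fg_top.map f)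
  refine ⟨s, 0, LinearMap.ext fun x => ?_⟩
  rw [← ker_lsubtypeDomain_compl] at hs
  exact (hs ⟨x, trivial, rfl⟩).symm

lemma of_isProjectivePresentation (hi : IsProjectivePresentation i p)
    (hi' : IsProjectivePresentation i' p') (h : ExtendsModFinite.{u} A i) :
    ExtendsModFinite.{u} A i' := by
  have := hi.projective
  have := hi'.projective
  obtain ⟨α, hα⟩ := Module.projective_lifting_property p' p hi'.surjective
  obtain ⟨β, hβ⟩ := Module.projective_lifting_property p p' hi.surjective
  have hα (x) : p' (α x) = p x := LinearMap.congr_fun hα x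
  have hβ (x) : p (β x) = p' x := LinearMap.congr_fun hβ x
  obtain ⟨α₁, hα₁⟩ := hi'.exists_comp_eq (f := α ∘ₗ i) fun x => by
    simp [hα, hi.exact.apply_apply_eq_zero]
  obtain ⟨β₁, hβ₁⟩ := hi.exists_comp_eq (f := β ∘ₗ i') fun x => by
    simp [hβ, hi'.exact.apply_apply_eq_zero]
  obtain ⟨γ, hγ⟩ := hi'.exists_comp_eq (f := LinearMap.id - α ∘ₗ β) fun x => by simp [hα, hβ]
  have hα₁ (x) : i' (α₁ x) = α (i x) := LinearMap.congr_fun hα₁ x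
  have hβ₁ (x) : i (β₁ x) = β (i' x) := LinearMap.congr_fun hβ₁ x
  have hγ (x) : i' (γ x) = x - α (β x) := LinearMap.congr_fun hγ x
  have hdecomp (u : U') : γ (i' u) + α₁ (β₁ u) = u :=
    hi'.injective (by rw [map_add, hγ, hα₁, hβ₁, sub_add_cancel])
  intro ι f
  obtain ⟨s, g, hg⟩ := h ι (f ∘ₗ α₁)
  let r : (ι →₀ A) →ₗ[S] _ := Finsupp.lsubtypeDomain (s : Set ι)ᶜ
  have hg (x) : g (i x) = r (f (α₁ x)) := LinearMap.congr_fun hg x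
  refine ⟨s, g ∘ₗ β + r ∘ₗ f ∘ₗ γ, LinearMap.ext fun u => ?_⟩
  calc g (β (i' u)) + r (f (γ (i' u)))
      = r (f (γ (i' u) + α₁ (β₁ u))) := by rw [← hβ₁, hg, map_add, map_add, add_comm]
    _ = r (f u) := by rw [hdecomp]

lemma exists_surjective_fg_ker {ι : Type u} {φ : (ι →₀ S) →ₗ[S] U} (hφ : Function.Surjective φ)
    (hker : (LinearMap.ker φ).FG) (h : ExtendsModFinite.{u} S i) :
    ∃ (κ : Type u) (g : P →ₗ[S] κ →₀ S),
      Function.Surjective (g ∘ₗ i ∘ₗ φ) ∧ (LinearMap.ker (g ∘ₗ i ∘ₗ φ)).FG := by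
  obtain ⟨s, hs⟩ := exists_finset_le_supported_of_fg hker
  rw [← ker_lsubtypeDomain_compl] at hs
  obtain ⟨f, hf⟩ := exists_comp_eq_of_ker_le hφ hs
  obtain ⟨t, g, hg⟩ := h _ f
  refine ⟨_, g, ?_⟩
  rw [← LinearMap.comp_assoc, hg, LinearMap.comp_assoc, hf]
  have hr (α : Type u) (s : Set α) :
      Function.Surjective (Finsupp.lsubtypeDomain s : (α →₀ S) →ₗ[S] _) :=
    lsubtypeDomain_surjective s
  exact ⟨(hr _ _).comp (hr _ _), Submodule.fg_ker_comp _ _ (ker_lsubtypeDomain_compl_fg s)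
    (ker_lsubtypeDomain_compl_fg t) (hr _ _)⟩

end ExtendsModFinite

end ExtendsModFinite

section FinitePresentation

variable {S F U G : Type*} [Ring S] [AddCommGroup F] [Module S F] [AddCommGroup U] [Module S U]
  [AddCommGroup G] [Module S G]

lemma finitePresentation_ker_of_fg [Module.Projective S F] [Module.Projective S G]
    {ρ : F →ₗ[S] G} (hρ : Function.Surjective ρ) (hker : (LinearMap.ker ρ).FG) :
    Module.FinitePresentation S (LinearMap.ker ρ) := by
  have := projective_ker hρ
  have : Module.Finite S (LinearMap.ker ρ) := Module.Finite.iff_fg.2 hker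
  exact Module.finitePresentation_of_projective S _

lemma finitePresentation_ker_of_comp {φ : F →ₗ[S] U} {h : U →ₗ[S] G} (hφ : Function.Surjective φ)
    (hker : (LinearMap.ker φ).FG) [Module.FinitePresentation S (LinearMap.ker (h ∘ₗ φ))] :
    Module.FinitePresentation S (LinearMap.ker h) := by
  let ψ : LinearMap.ker (h ∘ₗ φ) →ₗ[S] LinearMap.ker h := φ.restrict fun _ hx => hx
  refine Module.finitePresentation_of_surjective ψ ?_ ?_
  · rintro ⟨u, hu⟩
    obtain ⟨x, rfl⟩ := hφ u
    exact ⟨⟨x, hu⟩, rfl⟩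
  · refine Submodule.fg_of_fg_map_injective _ (LinearMap.ker (h ∘ₗ φ)).injective_subtype ?_
    convert hker
    ext x
    constructor
    · rintro ⟨y, hy, rfl⟩
      exact congrArg Subtype.val hy
    · intro hx
      exact ⟨⟨x, by simp [LinearMap.mem_ker.1 hx]⟩, Subtype.ext hx, rfl⟩

end FinitePresentation

section Syzygies

variable {S : Type u} [Ring S] {U P M : Type u} [AddCommGroup U] [Module S U]
  [AddCommGroup P] [Module S P] [AddCommGroup M] [Module S M]
  {i : U →ₗ[S] P} {p : P →ₗ[S] M}

theorem IsProjectivePresentation.exists_finitePresentation (hi : IsProjectivePresentation i p)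
    (hU : IsFinitelyRelated S U) (h : ExtendsModFinite.{u} S i) :
    ∃ (V Q : Type u) (_ : AddCommGroup V) (_ : Module S V) (_ : AddCommGroup Q) (_ : Module S Q)
      (j : V →ₗ[S] Q) (q : Q →ₗ[S] M),
      IsProjectivePresentation j q ∧ Module.FinitePresentation S V := by
  obtain ⟨X, _, _, ι, φ, _, hφ, hker⟩ := hU.exists_free_cover_prod
  have hi' := hi.prodMap_id (X := X)
  obtain ⟨κ, g, hg, hgker⟩ :=
    (h.of_isProjectivePresentation hi hi').exists_surjective_fg_ker hφ hker
  rw [← LinearMap.comp_assoc] at hg hgker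
  have := finitePresentation_ker_of_fg hg hgker
  exact ⟨_, _, _, _, _, _, _, _, hi'.restrict_ker g (.of_comp (g := φ) hg),
    finitePresentation_ker_of_comp hφ hker⟩
end Syzygies

section OpcyclesComparison

variable {C D ι : Type*} [Category* C] [Category* D] [Preadditive C] [Preadditive D]
  [CategoryWithHomology C] [CategoryWithHomology D] {c : ComplexShape ι}

/-- The canonical comparison morphism from the opcycles of the image under `F` of a complex to the
image under `F` of the opcycles of the complex. -/
def opcyclesComparison (F : C ⥤ D) [F.Additive] (K : HomologicalComplex C c) (j : ι) :
    ((F.mapHomologicalComplex c).obj K).opcycles j ⟶ F.obj (K.opcycles j) :=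
  HomologicalComplex.descOpcycles _ (F.map (K.pOpcycles j)) _ rfl <|
    (F.map_comp _ _).symm.trans <| (congrArg F.map (K.d_pOpcycles _ j)).trans (F.map_zero _ _)

variable (F G : C ⥤ D) [F.Additive] [G.Additive] (K : HomologicalComplex C c) (i j : ι)

lemma p_opcyclesComparison :
    ((F.mapHomologicalComplex c).obj K).pOpcycles j ≫ opcyclesComparison F K j =
      F.map (K.pOpcycles j) :=
  HomologicalComplex.p_descOpcycles _ _ _ _ _

lemma opcyclesComparison_map_fromOpcycles :
    opcyclesComparison F K i ≫ F.map (K.fromOpcycles i j) =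
      ((F.mapHomologicalComplex c).obj K).fromOpcycles i j := by
  refine (cancel_epi (HomologicalComplex.pOpcycles _ _)).1 <| (Category.assoc _ _ _).symm.trans <|
    Eq.trans ?_ (HomologicalComplex.p_fromOpcycles _ _ _).symm
  exact (congrArg (· ≫ F.map (K.fromOpcycles i j)) (p_opcyclesComparison F K i)).trans <|
    (F.map_comp _ _).symm.trans (congrArg F.map (K.p_fromOpcycles i j))

variable {F G} in
lemma opcyclesComparison_naturality (α : F ⟶ G) :
    HomologicalComplex.opcyclesMap ((NatTrans.mapHomologicalComplex α c).app K) j ≫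
      opcyclesComparison G K j = opcyclesComparison F K j ≫ α.app (K.opcycles j) := by
  rw [← cancel_epi (HomologicalComplex.pOpcycles _ _), HomologicalComplex.p_opcyclesMap_assoc,
    p_opcyclesComparison, ← Category.assoc, p_opcyclesComparison]
  exact (α.naturality (K.pOpcycles j)).symm

instance [PreservesFiniteColimits F] : IsIso (opcyclesComparison F K j) := by
  let h₁ := ((F.mapHomologicalComplex c).obj K).opcyclesIsCokernel _ j rfl
  let h₂ := CokernelCofork.mapIsColimit _ (K.opcyclesIsCokernel _ j rfl) F
  have : opcyclesComparison F K j = (h₁.coconePointUniqueUpToIso h₂).hom :=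
    (cancel_epi (HomologicalComplex.pOpcycles _ _)).1 <| (p_opcyclesComparison F K j).trans
      (h₁.comp_coconePointUniqueUpToIso_hom h₂ WalkingParallelPair.one).symm
  exact this ▸ Iso.isIso_hom _

end OpcyclesComparison

section LeftDerived

variable {C D : Type*} [Category* C] [Category* D] [Abelian C] [Abelian D]
  [HasProjectiveResolutions C] {X : C} (P : ProjectiveResolution X) (F G : C ⥤ D) [F.Additive]
  [G.Additive] (n : ℕ)

/-- `ProjectiveResolution.isoLeftDerivedObj` with `HomologicalComplex.homology` in place of the
homology functor. -/
def leftDerivedObjIsoHomology :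
    (F.leftDerived n).obj X ≅ ((F.mapHomologicalComplex _).obj P.complex).homology n :=
  P.isoLeftDerivedObj F n

variable {F G} in
lemma leftDerivedObjIsoHomology_naturality (α : F ⟶ G) :
    (NatTrans.leftDerived α n).app X ≫ (leftDerivedObjIsoHomology P G n).hom =
      (leftDerivedObjIsoHomology P F n).hom ≫ HomologicalComplex.homologyMap
        ((NatTrans.mapHomologicalComplex α _).app P.complex) n :=
  (Iso.eq_comp_inv _).1
    ((ProjectiveResolution.leftDerived_app_eq α P n).trans (Category.assoc _ _ _).symm)

/-- The canonical morphism from the `n`-th left derived functor of `F` at `X` to the value of `F`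
at an `n`-th syzygy of `X`. -/
def leftDerivedToSyzygy : (F.leftDerived n).obj X ⟶ F.obj (P.complex.opcycles n) :=
  (leftDerivedObjIsoHomology P F n).hom ≫ HomologicalComplex.homologyι _ n ≫
    opcyclesComparison F P.complex n

variable {F G} in
lemma leftDerivedToSyzygy_naturality (α : F ⟶ G) :
    (NatTrans.leftDerived α n).app X ≫ leftDerivedToSyzygy P G n =
      leftDerivedToSyzygy P F n ≫ α.app (P.complex.opcycles n) := by
  simp only [leftDerivedToSyzygy, Category.assoc, ← opcyclesComparison_naturality]
  rw [← Category.assoc, leftDerivedObjIsoHomology_naturality, Category.assoc]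
  exact congrArg _ (HomologicalComplex.homologyι_naturality_assoc _ _ _)

lemma leftDerivedToSyzygy_map_fromOpcycles (m : ℕ) :
    leftDerivedToSyzygy P F n ≫ F.map (P.complex.fromOpcycles n m) = 0 := by
  have : HomologicalComplex.homologyι _ n ≫ opcyclesComparison F P.complex n ≫
      F.map (P.complex.fromOpcycles n m) = 0 :=
    (congrArg _ (opcyclesComparison_map_fromOpcycles F P.complex n m)).trans
      (HomologicalComplex.homologyι_comp_fromOpcycles _ n m)
  simp only [leftDerivedToSyzygy, Category.assoc, this, comp_zero]

instance [PreservesFiniteColimits F] : Mono (leftDerivedToSyzygy P F n) := by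
  unfold leftDerivedToSyzygy
  infer_instance

lemma exact_leftDerivedToSyzygy [PreservesFiniteColimits F] :
    (ShortComplex.mk _ _ (leftDerivedToSyzygy_map_fromOpcycles P F (n + 1) n)).Exact := by
  let K := (F.mapHomologicalComplex _).obj P.complex
  have : (ShortComplex.mk _ _ (K.homologyι_comp_fromOpcycles (n + 1) n)).Exact :=
    ShortComplex.exact_of_f_is_kernel _ (K.homologyIsKernel _ _ (by simp))
  refine (ShortComplex.exact_iff_of_iso ?_).1 this
  refine ShortComplex.isoMk (leftDerivedObjIsoHomology P F (n + 1)).symm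
    (asIso (opcyclesComparison F P.complex (n + 1))) (Iso.refl _) ?_ ?_
  · simp [leftDerivedToSyzygy, K]
  · exact (opcyclesComparison_map_fromOpcycles ..).trans (Category.comp_id _).symm

end LeftDerived

section Ext

lemma additive_of_epi_app {C D : Type*} [Category* C] [Category* D] [Preadditive C] [Preadditive D]
    {F G : C ⥤ D} [F.Additive] (θ : F ⟶ G) [∀ X, Epi (θ.app X)] : G.Additive where
  map_add {X Y f g} := by
    rw [← cancel_epi (θ.app X), ← θ.naturality, F.map_add, Preadditive.add_comp, θ.naturality,
      θ.naturality, Preadditive.comp_add]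

variable {R C : Type*} [Ring R] [Category.{v} C] [Abelian C] [Linear R C] [EnoughProjectives C]

instance (Y : C) : PreservesLimits ((linearYoneda R C).obj Y) :=
  have : PreservesLimits ((linearYoneda R C).obj Y ⋙ forget (ModuleCat R)) :=
    inferInstanceAs (PreservesLimits (yoneda.obj Y))
  preservesLimits_of_reflects_of_preserves _ (forget (ModuleCat R))

instance (Y : C) : PreservesFiniteColimits ((linearYoneda R C).obj Y).rightOp :=
  have : PreservesFiniteLimits ((linearYoneda R C).obj Y) := inferInstance
  preservesFiniteColimits_rightOp _

variable (R) {X : C} (P : ProjectiveResolution X) (n : ℕ)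

/-- The canonical map from the morphisms out of an `n`-th syzygy of `X` to `Extⁿ(X, -)`. -/
def syzygyToExt :
    (linearCoyoneda R C).obj (op (P.complex.opcycles n)) ⟶ (Ext R C n).obj (op X) where
  app Y := (leftDerivedToSyzygy P ((linearYoneda R C).obj Y).rightOp n).unop
  naturality _ _ h := congrArg Quiver.Hom.unop (leftDerivedToSyzygy_naturality P n
      (NatTrans.rightOp ((linearYoneda R C).map h))).symm

instance (Y : C) : Epi ((syzygyToExt R P n).app Y) :=
  inferInstanceAs (Epi (leftDerivedToSyzygy P ((linearYoneda R C).obj Y).rightOp n).unop)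

instance : ((Ext R C n).obj (op X)).Additive :=
  additive_of_epi_app (syzygyToExt R (projectiveResolution X) n)

lemma syzygyToExt_app_eq_zero_iff {Y : C} (f : P.complex.opcycles (n + 1) ⟶ Y) :
    (syzygyToExt R P (n + 1)).app Y f = 0 ↔
      ∃ g : P.complex.X n ⟶ Y, P.complex.fromOpcycles (n + 1) n ≫ g = f :=
  (ShortComplex.ShortExact.moduleCat_exact_iff_function_exact _).1
    (exact_leftDerivedToSyzygy P ((linearYoneda R C).obj Y).rightOp n).unop f

end Ext

section SumComparison

variable {S : Type*} [Ring S] {B : Type*} [Ring B]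

/-- The coproduct of copies of a module is the module of finitely supported functions. -/
def sigmaConstIso (A : ModuleCat.{u} S) (ι : Type u) :
    ∐ (fun _ : ι => A) ≅ ModuleCat.of S (ι →₀ A) where
  hom := Sigma.desc fun i => ModuleCat.ofHom (Finsupp.lsingle i)
  inv := ModuleCat.ofHom (Finsupp.lsum ℕ fun i => (Sigma.ι (fun _ : ι => A) i).hom)
  hom_inv_id := by
    refine Sigma.hom_ext _ _ fun i => ?_
    ext x
    simp
  inv_hom_id := by
    ext : 1
    refine Finsupp.lhom_ext fun i x => ?_
    simp

lemma ι_sigmaConstIso_hom (A : ModuleCat.{u} S) {ι : Type u} (i : ι) :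
    Sigma.ι (fun _ : ι => A) i ≫ (sigmaConstIso A ι).hom = ModuleCat.ofHom (Finsupp.lsingle i) :=
  Sigma.ι_desc _ _

variable (T : ModuleCat.{u} S ⥤ ModuleCat.{u} B) (A : ModuleCat.{u} S) {ι : Type u}

variable (ι) in
/-- The canonical map from the direct sum of copies of the value of a functor at `A` to its value
at the direct sum of copies of `A`. -/
def finsuppComparison : (ι →₀ T.obj A) →ₗ[B] T.obj (ModuleCat.of S (ι →₀ A)) :=
  Finsupp.lsum ℕ fun i => (T.map (ModuleCat.ofHom (Finsupp.lsingle i))).hom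

lemma finsuppComparison_apply (t : ι →₀ T.obj A) :
    finsuppComparison T A ι t = t.sum fun i => T.map (ModuleCat.ofHom (Finsupp.lsingle i)) :=
  rfl

lemma finsuppComparison_single (i : ι) (x : T.obj A) :
    finsuppComparison T A ι (Finsupp.single i x) =
      T.map (ModuleCat.ofHom (Finsupp.lsingle i)) x := by
  simp [finsuppComparison]

variable (ι) in
lemma isIso_sigmaDesc_map_iff :
    IsIso (Sigma.desc fun i : ι => T.map (Sigma.ι (fun _ : ι => A) i)) ↔
      Function.Bijective (finsuppComparison T A ι) := by
  have h : (Sigma.desc fun i : ι => T.map (Sigma.ι (fun _ : ι => A) i)) =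
      (sigmaConstIso (T.obj A) ι).hom ≫ ModuleCat.ofHom (finsuppComparison T A ι) ≫
        T.map (sigmaConstIso A ι).inv := by
    refine Sigma.hom_ext _ _ fun i => ?_
    rw [Sigma.ι_desc, ← Category.assoc, ι_sigmaConstIso_hom, ← Category.assoc,
      ← cancel_mono (T.map (sigmaConstIso A ι).hom), ← T.map_comp, ι_sigmaConstIso_hom,
      Category.assoc, ← T.map_comp, Iso.inv_hom_id, T.map_id, Category.comp_id]
    ext x
    simp [finsuppComparison_single]
  rw [h, isIso_comp_left_iff, isIso_comp_right_iff]
  exact ConcreteCategory.isIso_iff_bijective _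

lemma map_lapply_finsuppComparison [T.PreservesZeroMorphisms] (t : ι →₀ T.obj A) (j : ι) :
    T.map (ModuleCat.ofHom (Finsupp.lapply j)) (finsuppComparison T A ι t) = t j := by
  classical
  suffices (T.map (ModuleCat.ofHom (Finsupp.lapply j))).hom ∘ₗ finsuppComparison T A ι =
      Finsupp.lapply j from LinearMap.congr_fun this t
  refine Finsupp.lhom_ext fun i x => ?_
  have hij : ModuleCat.ofHom (Finsupp.lsingle i) ≫ ModuleCat.ofHom (Finsupp.lapply j) =
      if i = j then 𝟙 A else 0 := by
    ext y
    split_ifs with h <;> simp [h]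
  rw [LinearMap.comp_apply, finsuppComparison_single, ← ModuleCat.comp_apply, ← T.map_comp, hij]
  split_ifs with h <;> simp [h]

lemma finsuppComparison_injective [T.PreservesZeroMorphisms] :
    Function.Injective (finsuppComparison T A ι) := fun t t' h => by
  ext j
  rw [← map_lapply_finsuppComparison, h, map_lapply_finsuppComparison]

lemma map_lsubtypeDomain_compl_finsuppComparison [T.PreservesZeroMorphisms] {s : Finset ι}
    {t : ι →₀ T.obj A} (ht : t.support ⊆ s) :
    T.map (ModuleCat.ofHom (Finsupp.lsubtypeDomain (s : Set ι)ᶜ)) (finsuppComparison T A ι t) =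
      0 := by
  have h (i) (hi : i ∈ t.support) : ModuleCat.ofHom (Finsupp.lsingle i) ≫
      ModuleCat.ofHom (Finsupp.lsubtypeDomain (s : Set ι)ᶜ) =
        (0 : A ⟶ ModuleCat.of S (((s : Set ι)ᶜ : Set ι) →₀ A)) := by
    ext x k
    have : k.1 ≠ i := fun hk => k.2 (hk ▸ ht hi)
    simp [Finsupp.lsubtypeDomain_apply, this]
  rw [finsuppComparison_apply, Finsupp.sum, map_sum]
  refine Finset.sum_eq_zero fun i hi => ?_
  rw [← ModuleCat.comp_apply, ← T.map_comp, h i hi, T.map_zero]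
  rfl

lemma map_sum_lapply_comp_lsingle [T.Additive] (s : Finset ι)
    (y : T.obj (ModuleCat.of S (ι →₀ A))) :
    T.map (∑ i ∈ s, ModuleCat.ofHom (Finsupp.lapply i) ≫ ModuleCat.ofHom (Finsupp.lsingle i)) y =
      finsuppComparison T A ι (∑ i ∈ s,
        Finsupp.single i (T.map (ModuleCat.ofHom (Finsupp.lapply i)) y)) := by
  simp only [T.map_sum, T.map_comp, map_sum, finsuppComparison_single, ModuleCat.hom_sum,
    LinearMap.sum_apply, ModuleCat.hom_comp, LinearMap.comp_apply]

lemma mem_range_finsuppComparison_iff [T.Additive] (y : T.obj (ModuleCat.of S (ι →₀ A))) :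
    y ∈ LinearMap.range (finsuppComparison T A ι) ↔ ∃ s : Finset ι,
      T.map (ModuleCat.ofHom (Finsupp.lsubtypeDomain (s : Set ι)ᶜ)) y = 0 := by
  constructor
  · rintro ⟨t, rfl⟩
    exact ⟨t.support, map_lsubtypeDomain_compl_finsuppComparison T A subset_rfl⟩
  · rintro ⟨s, hs⟩
    let e : ModuleCat.of S (ι →₀ A) ⟶ ModuleCat.of S (ι →₀ A) :=
      ∑ i ∈ s, ModuleCat.ofHom (Finsupp.lapply i) ≫ ModuleCat.ofHom (Finsupp.lsingle i)
    have he {x : ι →₀ A} (hx : x ∈ Finsupp.supported A S (s : Set ι)) : e x = x := calc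
      e x = ∑ i ∈ s, Finsupp.single i (x i) := by simp [e]
      _ = x.sum Finsupp.single :=
        (Finset.sum_subset (Finset.coe_subset.1 hx) (by simp +contextual)).symm
      _ = x := x.sum_single
    obtain ⟨g, hg⟩ := exists_comp_eq_of_ker_le (f := (𝟙 _ - e).hom)
      (lsubtypeDomain_surjective (S := S) (A := A) (s : Set ι)ᶜ) <| by
        rw [ker_lsubtypeDomain_compl]
        intro x hx
        simp [he hx]
    have h : ModuleCat.ofHom (Finsupp.lsubtypeDomain (s : Set ι)ᶜ) ≫ ModuleCat.ofHom g = 𝟙 _ - e :=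
      ModuleCat.hom_ext hg
    refine ⟨_, (map_sum_lapply_comp_lsingle T A s y).symm.trans ?_⟩
    have h0 : T.map (𝟙 _ - e) y = 0 := by rw [← h, T.map_comp, ModuleCat.comp_apply, hs, map_zero]
    rw [T.map_sub, T.map_id] at h0
    exact (sub_eq_zero.1 h0).symm

lemma bijective_finsuppComparison_iff [T.Additive] :
    Function.Bijective (finsuppComparison T A ι) ↔ ∀ y : T.obj (ModuleCat.of S (ι →₀ A)),
      ∃ s : Finset ι, T.map (ModuleCat.ofHom (Finsupp.lsubtypeDomain (s : Set ι)ᶜ)) y = 0 := by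
  simp only [← mem_range_finsuppComparison_iff]
  exact ⟨fun h => h.2, fun h => ⟨finsuppComparison_injective T A, h⟩⟩

end SumComparison

section ExtSums

variable {S : Type u} [Ring S] (B : Type*) [Ring B] [Linear B (ModuleCat.{u} S)]
  {M : ModuleCat.{u} S} (P : ProjectiveResolution M) (A : ModuleCat.{u} S)

theorem isIso_sigmaDesc_ext_succ_iff (n : ℕ) :
    (∀ ι : Type u, IsIso (Sigma.desc fun i : ι =>
      ((Ext B (ModuleCat.{u} S) (n + 1)).obj (op M)).map (Sigma.ι (fun _ : ι => A) i))) ↔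
      ExtendsModFinite.{u} A (P.complex.fromOpcycles (n + 1) n).hom := by
  let θ := syzygyToExt B P (n + 1)
  have hθ (Y) : Function.Surjective (θ.app Y) := (ModuleCat.epi_iff_surjective _).1 inferInstance
  have hmap {Y Z : ModuleCat.{u} S} (r : Y ⟶ Z) (f : P.complex.opcycles (n + 1) ⟶ Y) :
      ((Ext B (ModuleCat.{u} S) (n + 1)).obj (op M)).map r (θ.app Y f) = θ.app Z (f ≫ r) :=
    (NatTrans.naturality_apply θ r f).symm
  simp only [isIso_sigmaDesc_map_iff, bijective_finsuppComparison_iff]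
  refine forall_congr' fun ι => (hθ _).forall.trans ?_
  refine ModuleCat.homEquiv.forall_congr fun f => exists_congr fun s => ?_
  rw [hmap, syzygyToExt_app_eq_zero_iff]
  exact ModuleCat.homEquiv.exists_congr fun g => ModuleCat.hom_ext_iff

lemma isProjectivePresentation_fromOpcycles :
    IsProjectivePresentation (P.complex.fromOpcycles 1 0).hom
      (ModuleCat.Hom.hom (P.π.f 0) : P.complex.X 0 →ₗ[S] M) where
  projective := (IsProjective.iff_projective _).2 (P.projective 0)
  injective := by
    rw [← ModuleCat.mono_iff_injective]
    exact Preadditive.mono_of_isZero_kernel' _ (P.complex.homologyIsKernel 1 0 (by simp))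
      (P.complex_exactAt_succ 0).isZero_homology
  exact := by
    have hex := (ShortComplex.ShortExact.moduleCat_exact_iff_function_exact _).1 P.exact₀
    refine fun x => (hex x).trans ?_
    change (∃ y, (P.complex.d 1 0).hom y = x) ↔ ∃ y, (P.complex.fromOpcycles 1 0).hom y = x
    have hp : Function.Surjective (P.complex.pOpcycles 1) :=
      (ModuleCat.epi_iff_surjective _).1 inferInstance
    rw [hp.exists, ← P.complex.p_fromOpcycles 1 0]
    rfl
  surjective := (ModuleCat.epi_iff_surjective _).1 (inferInstanceAs (Epi (P.π.f 0)))

variable {A} in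
theorem IsProjectivePresentation.isIso_sigmaDesc_ext_one_iff {U Q : Type u} [AddCommGroup U]
    [Module S U] [AddCommGroup Q] [Module S Q] {i : U →ₗ[S] Q} {p : Q →ₗ[S] M}
    (h : IsProjectivePresentation i p) :
    (∀ ι : Type u, IsIso (Sigma.desc fun i : ι =>
      ((Ext B (ModuleCat.{u} S) 1).obj (op M)).map (Sigma.ι (fun _ : ι => A) i))) ↔
      ExtendsModFinite.{u} A i := by
  let P := projectiveResolution M
  have hP := isProjectivePresentation_fromOpcycles P
  exact (isIso_sigmaDesc_ext_succ_iff B P A 0).trans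
    ⟨.of_isProjectivePresentation hP h, .of_isProjectivePresentation h hP⟩

end ExtSums

section RightModules

variable {R : Type} [Ring R] {M : RMod R}

lemma isProjectivePresentation_iff {U P : RMod R} {i : U ⟶ P} {p : P ⟶ M} :
    IsProjectivePresentation i.hom p.hom ↔ ∃ w : i ≫ p = 0,
      Mono i ∧ Epi p ∧ (ShortComplex.mk i p w).Exact ∧ Projective P := by
  rw [ModuleCat.mono_iff_injective, ModuleCat.epi_iff_surjective, ← IsProjective.iff_projective]
  constructor
  · intro h
    refine ⟨?_, h.injective, h.surjective, ?_, h.projective⟩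
    · ext x
      exact h.exact.apply_apply_eq_zero x
    · exact (ShortComplex.ShortExact.moduleCat_exact_iff_function_exact _).2 h.exact
  · rintro ⟨w, hi, hp, hex, hP⟩
    exact ⟨hP, hi, (ShortComplex.ShortExact.moduleCat_exact_iff_function_exact _).1 hex, hp⟩

lemma isOmega1_iff {Q : RMod R → Prop} :
    IsOmega1 R Q M ↔ ∃ (U P : RMod R) (i : U →ₗ[Rᵐᵒᵖ] P) (p : P →ₗ[Rᵐᵒᵖ] M),
      IsProjectivePresentation i p ∧ Q U := by
  constructor
  · rintro ⟨U, P, i, p, w, hi, hp, hex, hP, hU⟩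
    exact ⟨U, P, i.hom, p.hom, isProjectivePresentation_iff.2 ⟨w, hi, hp, hex, hP⟩, hU⟩
  · rintro ⟨U, P, i, p, h, hU⟩
    obtain ⟨w, hi, hp, hex, hP⟩ :=
      isProjectivePresentation_iff (i := ModuleCat.ofHom i) (p := ModuleCat.ofHom p).1 h
    exact ⟨U, P, _, _, w, hi, hp, hex, hP, hU⟩

lemma HasProjDimLE1.isOmega1_isFinitelyRelated (hM : HasProjDimLE1 R M) :
    IsOmega1 R (fun U => IsFinitelyRelated Rᵐᵒᵖ U) M := by
  obtain ⟨P₁, P₀, d, q, w, hP₁, hP₀, hd, hq, hex⟩ := hM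
  have : Module.Projective Rᵐᵒᵖ P₁ := (IsProjective.iff_projective _).2 hP₁
  exact ⟨P₁, P₀, d, q, w, hd, hq, hex, hP₀, .of_projective⟩

lemma IsProjectivePresentation.commutesWithSumsOfR_one_iff_extendsModFinite {U P : Type}
    [AddCommGroup U] [Module Rᵐᵒᵖ U] [AddCommGroup P] [Module Rᵐᵒᵖ P]
    {i : U →ₗ[Rᵐᵒᵖ] P} {p : P →ₗ[Rᵐᵒᵖ] M} (h : IsProjectivePresentation i p) :
    CommutesWithSumsOfR R 1 M ↔ ExtendsModFinite.{0} Rᵐᵒᵖ i :=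
  (h.isIso_sigmaDesc_ext_one_iff ℤ (A := regR R)).trans
    ⟨.of_equiv (MulOpposite.opLinearEquiv Rᵐᵒᵖ), .of_equiv (MulOpposite.opLinearEquiv Rᵐᵒᵖ).symm⟩

theorem IsOmega1.commutesWithSumsOfR_iff
    (hM : IsOmega1 R (fun U => IsFinitelyRelated Rᵐᵒᵖ U) M) :
    CommutesWithSumsOfR R 1 M ↔ IsOmega1 R (fun U => Module.FinitePresentation Rᵐᵒᵖ U) M := by
  constructor
  · intro hExt
    obtain ⟨U, P, i, p, h, hU⟩ := isOmega1_iff.1 hM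
    obtain ⟨V, Q, _, _, _, _, j, q, hj, hV⟩ :=
      h.exists_finitePresentation hU (h.commutesWithSumsOfR_one_iff_extendsModFinite.1 hExt)
    exact isOmega1_iff.2 ⟨.of _ V, .of _ Q, j, q, hj, hV⟩
  · intro hfp
    obtain ⟨V, Q, j, q, hj, hV⟩ := isOmega1_iff.1 hfp
    exact hj.commutesWithSumsOfR_one_iff_extendsModFinite.2 (.of_finite j)

lemma IsOmega1.quotient {L : RMod R} (hL : IsOmega1 R (fun U => IsFinitelyRelated Rᵐᵒᵖ U) L)
    {K : Submodule Rᵐᵒᵖ L} (hK : IsFinitelyRelated Rᵐᵒᵖ K) :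
    IsOmega1 R (fun U => IsFinitelyRelated Rᵐᵒᵖ U) (ModuleCat.of Rᵐᵒᵖ (↥L ⧸ K)) := by
  obtain ⟨P₁, P₀, d, q, h, hP₁⟩ := isOmega1_iff.1 hL
  let d' : P₁ →ₗ[Rᵐᵒᵖ] K.comap q := d.codRestrict _ fun x => by
    simp [h.exact.apply_apply_eq_zero]
  let q' : K.comap q →ₗ[Rᵐᵒᵖ] K := q.restrict fun _ hx => hx
  refine isOmega1_iff.2 ⟨.of _ (K.comap q), P₀, (K.comap q).subtype, K.mkQ ∘ₗ q,
    ⟨h.projective, Subtype.val_injective, fun x => ?_, K.mkQ_surjective.comp h.surjective⟩,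
    hP₁.of_exact (i := d') (q := q') hK ?_ ?_ ?_⟩
  · simp
  · exact fun x y hxy => h.injective (congrArg Subtype.val hxy)
  · rintro ⟨x, hx⟩
    simp [d', q', Subtype.ext_iff, h.exact x]
  · rintro ⟨y, hy⟩
    obtain ⟨x, rfl⟩ := h.surjective y
    exact ⟨⟨x, hy⟩, rfl⟩

end RightModules

theorem quotient_by_fp_submodule_sumsOfR_iff_fpOmega1_general (R : Type) [Ring R] (L : RMod R)
    (hL : IsOmega1 R (fun U => IsFinitelyRelated Rᵐᵒᵖ U) L) (K : Submodule Rᵐᵒᵖ L)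
    (hK : IsFinitelyRelated Rᵐᵒᵖ K) :
    CommutesWithSumsOfR R 1 (ModuleCat.of Rᵐᵒᵖ (↥L ⧸ K)) ↔
      IsOmega1 R (fun X => Module.FinitePresentation Rᵐᵒᵖ X)
        (ModuleCat.of Rᵐᵒᵖ (↥L ⧸ K)) :=
  (hL.quotient hK).commutesWithSumsOfR_iff

theorem quotient_by_fp_submodule_sumsOfR_iff_fpOmega1
    (R : Type) [Ring R] (L : RMod R) (hpd : HasProjDimLE1 R L)
    (K : Submodule Rᵐᵒᵖ L) (hK : Module.FinitePresentation Rᵐᵒᵖ K) :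
    CommutesWithSumsOfR R 1 (ModuleCat.of Rᵐᵒᵖ (↥L ⧸ K)) ↔
      IsOmega1 R (fun X => Module.FinitePresentation Rᵐᵒᵖ X)
        (ModuleCat.of Rᵐᵒᵖ (↥L ⧸ K)) := by
  exact quotient_by_fp_submodule_sumsOfR_iff_fpOmega1_general R L hpd.isOmega1_isFinitelyRelated K
    .of_finitePresentation
end
end

section
/- Every module M over any ring R can be written as the inverse limit of an inverse system of injective R-modules. -/
open CategoryTheory CategoryTheory.Limits Opposite

noncomputable section

/-- A realization of the module `M` as the inverse limit of an inverse system
(indexed by a downward directed preorder) of injective modules. -/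
structure InjectiveInverseLimitPresentation (R : Type) [Ring R] (M : RMod R) where
  J : Type
  [instPreorder : Preorder J]
  [instNonempty : Nonempty J]
  directed : IsDirected J (· ≥ ·)
  D : J ⥤ RMod R
  inj : ∀ j : J, Injective (D.obj j)
  iso : M ≅ limit D

/-! Embed `M` as the kernel of a map `f : E ⟶ F` between injective modules, and choose a set `X`
whose cardinality is regular and exceeds the number of generators of every ideal of the ring. Call a
subset of `X` large if its complement has fewer than `#X` elements, and let `P` be the module of
families `X → F` vanishing on a large set. By Baer's criterion `P` is injective: a map from an ideal
to `P` vanishes at almost every coordinate, because it does so on each of the few generators, and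
there it can be extended by zero. For `U` large, the pairs `(a, b)` in `E × P` with `b x = f a` for
all `x ∉ U` form a direct summand of `E × P`, as one can overwrite `b` by `f a` off `U`. These
summands form a directed system of inclusions whose limit is their intersection: the pairs with `b`
constantly equal to `f a`. Since `b` vanishes somewhere, `f a = 0`, so the limit is `M`. -/

open Filter Cardinal
open scoped RestrictedProduct

universe u v w

theorem cocardinal_le_cofinite {X : Type u} {c : Cardinal.{u}} (hc : c.IsRegular) :
    cocardinal X hc ≤ cofinite :=
  le_cofinite_iff_compl_singleton_mem.2 fun x => (Set.finite_singleton x).compl_mem_cocardinal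

theorem cocardinal_neBot {X : Type u} {c : Cardinal.{u}} (hc : c.IsRegular) (hX : c ≤ #X) :
    (cocardinal X hc).NeBot := by
  rw [← inf_top_eq (cocardinal X hc), ← principal_univ, cocardinal_inf_principal_neBot_iff,
    mk_univ]
  exact hX

section RestrictedProduct

variable {A : Type u} [Ring A] {X : Type w} {l : Filter X} {c : Cardinal.{w}}

theorem eventually_forall_of_lift_mk_lt [CardinalInterFilter l c] {ι : Type u}
    (hι : lift.{w} #ι < lift.{u} c) {p : X → ι → Prop} (hp : ∀ i, ∀ᶠ x in l, p x i) :
    ∀ᶠ x in l, ∀ i, p x i := by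
  have hrange : #(Set.range fun i => {x | p x i}) < c := by
    rw [← Cardinal.lift_lt.{w, u}]
    exact mk_range_le_lift.trans_lt hι
  filter_upwards [(cardinal_sInter_mem hrange).2 (Set.forall_mem_range.2 hp)] with x hx i
  exact hx _ (Set.mem_range_self i)

variable {F : X → Type v} [∀ x, AddCommGroup (F x)] [∀ x, Module A (F x)]

variable (l) in
/-- The `x`-th coordinate of a restricted product of modules, as a linear map. -/
def restrictedProductEval (B : ∀ x, Submodule A (F x)) (x : X) :
    Πʳ x, [F x, B x]_[l] →ₗ[A] F x where
  toFun b := b x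
  map_add' _ _ := rfl
  map_smul' _ _ := rfl

/-- The linear map into a restricted product of modules with the given coordinates. -/
def restrictedProductLift {B : ∀ x, Submodule A (F x)} {N : Type*} [AddCommGroup N] [Module A N]
    (h : ∀ x, N →ₗ[A] F x) (hB : ∀ n, ∀ᶠ x in l, h x n ∈ B x) : N →ₗ[A] Πʳ x, [F x, B x]_[l] where
  toFun n := ⟨fun x => h x n, hB n⟩
  map_add' m n := RestrictedProduct.ext _ _ fun x => map_add (h x) m n
  map_smul' r n := RestrictedProduct.ext _ _ fun x => map_smul (h x) r n

theorem eventually_range_restrictedProductEval_comp_le [CardinalInterFilter l c]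
    {B : ∀ x, Submodule A (F x)} {N : Type u} [AddCommGroup N] [Module A N]
    (hN : lift.{w} (⊤ : Submodule A N).spanRank < lift.{u} c) (g : N →ₗ[A] Πʳ x, [F x, B x]_[l]) :
    ∀ᶠ x in l, LinearMap.range (restrictedProductEval l B x ∘ₗ g) ≤ B x := by
  rw [← Submodule.generators_card] at hN
  filter_upwards [eventually_forall_of_lift_mk_lt hN fun n => (g n).2] with x hx
  rw [LinearMap.range_eq_map, Submodule.map_le_iff_le_comap,
    ← Submodule.span_generators (⊤ : Submodule A N), Submodule.span_le]
  exact fun n hn => hx ⟨n, hn⟩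

theorem exists_extension_range_le {Q : Type v} [AddCommGroup Q] [Module A Q] {B : Submodule A Q}
    (hQ : Module.Baer A Q) (hB : Module.Baer A B) {I : Ideal A} (g : I →ₗ[A] Q) :
    ∃ h : A →ₗ[A] Q, (∀ r (hr : r ∈ I), h r = g ⟨r, hr⟩) ∧
      (LinearMap.range g ≤ B → LinearMap.range h ≤ B) := by
  by_cases hg : LinearMap.range g ≤ B
  · obtain ⟨h, hh⟩ := hB I (g.codRestrict B fun r => hg ⟨r, rfl⟩)
    refine ⟨B.subtype ∘ₗ h, fun r hr => congrArg Subtype.val (hh r hr), fun _ => ?_⟩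
    rintro _ ⟨r, rfl⟩
    exact (h r).2
  · obtain ⟨h, hh⟩ := hQ I g
    exact ⟨h, hh, fun hg' => absurd hg' hg⟩

theorem baer_restrictedProduct [CardinalInterFilter l c] {B : ∀ x, Submodule A (F x)}
    (hA : ∀ I : Ideal A, lift.{w} I.spanRank < lift.{u} c)
    (hF : ∀ x, Module.Baer A (F x)) (hB : ∀ x, Module.Baer A (B x)) :
    Module.Baer A Πʳ x, [F x, B x]_[l] := by
  intro I g
  choose h h_extends h_range using fun x =>
    exists_extension_range_le (hF x) (hB x) (restrictedProductEval l B x ∘ₗ g)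
  have hmem (r : A) : ∀ᶠ x in l, h x r ∈ B x := by
    filter_upwards [eventually_range_restrictedProductEval_comp_le
      ((Submodule.spanRank_top I).symm ▸ hA I) g] with x hx
    exact h_range x hx ⟨r, rfl⟩
  exact ⟨restrictedProductLift h hmem,
    fun r hr => RestrictedProduct.ext _ _ fun x => h_extends x r hr⟩

theorem baer_of_subsingleton {Q : Type v} [AddCommGroup Q] [Module A Q] [Subsingleton Q] :
    Module.Baer A Q :=
  fun _ _ => ⟨0, fun _ _ => Subsingleton.elim _ _⟩

end RestrictedProduct

section EqOff

variable {A : Type u} [Ring A] {E : Type*} {F : Type*} [AddCommGroup E] [Module A E]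
  [AddCommGroup F] [Module A F] {X : Type*}

/-- The submodule of those pairs `(a, b)`, where `b : X → F` vanishes eventually along `l`, such
that `b` is constantly equal to `f a` off `U`. The eventually vanishing families are encoded as the
restricted product of copies of `F` with respect to the zero submodules. -/
def eqOffSubmodule (f : E →ₗ[A] F) (l : Filter X) (U : Set X) :
    Submodule A (E × Πʳ _ : X, [F, (⊥ : Submodule A F)]_[l]) where
  carrier := {p | ∀ x ∉ U, p.2 x = f p.1}
  zero_mem' x _ := (map_zero f).symm
  add_mem' {p q} hp hq x hx := by simp [hp x hx, hq x hx]
  smul_mem' r p hp x hx := by simp [hp x hx]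

theorem eqOffSubmodule_mono (f : E →ₗ[A] F) (l : Filter X) : Monotone (eqOffSubmodule f l) :=
  fun _ _ hUV _ hp x hx => hp x fun hxU => hx (hUV hxU)

open Classical in
/-- The projection of the ambient module onto `eqOffSubmodule f l U` that overwrites `b` by `f a`
off `U`. This changes `b` only on the complement of a member of `l`. -/
def eqOffProjection (f : E →ₗ[A] F) {l : Filter X} {U : Set X} (hU : U ∈ l) :
    (E × Πʳ _ : X, [F, (⊥ : Submodule A F)]_[l]) →ₗ[A] eqOffSubmodule f l U :=
  let overwrite (x : X) : (E × Πʳ _ : X, [F, (⊥ : Submodule A F)]_[l]) →ₗ[A] F :=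
    if x ∈ U then restrictedProductEval l _ x ∘ₗ LinearMap.snd .. else f ∘ₗ LinearMap.fst ..
  ((LinearMap.fst ..).prod (restrictedProductLift overwrite fun p => by
    filter_upwards [hU, p.2.2] with x hxU hx
    rw [show overwrite x = _ from if_pos hxU]
    exact hx)).codRestrict _ fun p x hx => by
      change overwrite x p = f p.1
      simp [overwrite, hx]

theorem eqOffProjection_comp_subtype (f : E →ₗ[A] F) {l : Filter X} {U : Set X} (hU : U ∈ l) :
    eqOffProjection f hU ∘ₗ (eqOffSubmodule f l U).subtype = LinearMap.id := by
  classical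
  ext p x
  · rfl
  · change (if x ∈ U then _ else _ : _ →ₗ[A] F) p.1 = p.1.2 x
    split_ifs with hx
    · rfl
    · exact (p.2 x hx).symm

theorem iInf_eqOffSubmodule (f : E →ₗ[A] F) {l : Filter X} [l.NeBot] (hl : l ≤ cofinite) :
    ⨅ U : {U // U ∈ l}, eqOffSubmodule f l U =
      (LinearMap.ker f).map (LinearMap.inl A E Πʳ _ : X, [F, (⊥ : Submodule A F)]_[l]) := by
  ext ⟨a, b⟩
  simp only [Submodule.mem_iInf, Submodule.mem_map]
  constructor
  · intro h
    have hb (x : X) : b x = f a := h ⟨{x}ᶜ, le_cofinite_iff_compl_singleton_mem.1 hl x⟩ x (by simp)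
    obtain ⟨x, hx⟩ := b.2.exists
    have ha : f a = 0 := (hb x).symm.trans hx
    exact ⟨a, ha, Prod.ext rfl (RestrictedProduct.ext _ _ fun x => ((hb x).trans ha).symm)⟩
  · rintro ⟨_, ha, ⟨⟩⟩ U x -
    exact ha.symm

/-- A kernel `M` of `f : E →ₗ[A] F` is the intersection of the submodules `eqOffSubmodule f l U`. -/
def equivIInfEqOffSubmodule {M : Type*} [AddCommGroup M] [Module A M] {i : M →ₗ[A] E}
    {f : E →ₗ[A] F} (hi : Function.Injective i) (hif : LinearMap.range i = LinearMap.ker f)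
    {l : Filter X} [l.NeBot] (hl : l ≤ cofinite) :
    M ≃ₗ[A] (⨅ U : {U // U ∈ l}, eqOffSubmodule f l U : Submodule A _) :=
  (LinearEquiv.ofInjective (LinearMap.inl A E _ ∘ₗ i) (LinearMap.inl_injective.comp hi)).trans
    (.ofEq _ _ (by rw [iInf_eqOffSubmodule f hl, LinearMap.range_comp, hif]))

end EqOff

section SubmoduleDiagram

variable {A : Type u} [Ring A] {W : Type v} [AddCommGroup W] [Module A W] {J : Type*} [Preorder J]
  {N : J → Submodule A W}

/-- A monotone family of submodules, as a diagram of modules and inclusions. -/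
def submoduleDiagram (hN : Monotone N) : J ⥤ ModuleCat.{v} A where
  obj j := ModuleCat.of A (N j)
  map h := ModuleCat.ofHom (Submodule.inclusion (hN (leOfHom h)))

/-- The cone of inclusions of `⨅ j, N j` over `submoduleDiagram hN`. -/
def iInfCone (hN : Monotone N) : Cone (submoduleDiagram hN) where
  pt := ModuleCat.of A (⨅ j, N j : Submodule A W)
  π := { app j := ModuleCat.ofHom (Submodule.inclusion (iInf_le N j)) }

theorem coe_cone_π_app_eq [IsDirected J (· ≥ ·)] (hN : Monotone N) (s : Cone (submoduleDiagram hN))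
    (i j : J) (m : s.pt) : (N i).subtype (s.π.app i m) = (N j).subtype (s.π.app j m) := by
  have of_le {i j : J} (hij : i ≤ j) :
      (N i).subtype (s.π.app i m) = (N j).subtype (s.π.app j m) :=
    congrArg (N j).subtype (ConcreteCategory.congr_hom (s.w (homOfLE hij)) m)
  obtain ⟨k, hki, hkj⟩ := exists_le_le i j
  exact (of_le hki).symm.trans (of_le hkj)

/-- The intersection of a downward directed family of submodules is its inverse limit. -/
def isLimitIInfCone [IsDirected J (· ≥ ·)] [Nonempty J] (hN : Monotone N) :
    IsLimit (iInfCone hN) where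
  lift s :=
    let j₀ := Classical.arbitrary J
    ModuleCat.ofHom <| ((N j₀).subtype ∘ₗ (s.π.app j₀).hom).codRestrict _ fun m =>
      (Submodule.mem_iInf N).2 fun j =>
        Set.mem_of_eq_of_mem (coe_cone_π_app_eq hN s j₀ j m) (s.π.app j m).2
  fac s j := by
    ext m
    exact Subtype.ext (coe_cone_π_app_eq hN s _ j m)
  uniq s g hg := by
    ext m
    exact Subtype.ext (congrArg (N _).subtype (ConcreteCategory.congr_hom (hg _) m))

end SubmoduleDiagram

section Injective

theorem exists_mono_exact_injective {C : Type u} [Category.{v} C] [Abelian C] [EnoughInjectives C]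
    (M : C) : ∃ (E F : C) (i : M ⟶ E) (f : E ⟶ F) (w : i ≫ f = 0),
      Injective E ∧ Injective F ∧ Mono i ∧ (ShortComplex.mk i f w).Exact :=
  let I := injectiveResolution M
  ⟨_, _, I.ι.f 0, I.cocomplex.d 0 1, I.ι_f_zero_comp_complex_d, I.injective 0, I.injective 1,
    inferInstanceAs (Mono (I.ι.f 0)), I.exact₀⟩

variable {A : Type u} [Ring A] [Small.{v} A]

variable (A) in
theorem exists_isRegular_forall_spanRank_lt :
    ∃ c : Cardinal.{v}, c.IsRegular ∧ ∀ I : Ideal A, lift.{v} I.spanRank < lift.{u} c := by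
  refine ⟨Order.succ (max ℵ₀ #(Shrink.{v} A)), isRegular_succ (le_max_left _ _), fun I => ?_⟩
  calc lift.{v} I.spanRank ≤ lift.{v} #A := by
        rw [← Submodule.generators_card]
        exact Cardinal.lift_le.2 (mk_set_le _)
    _ = lift.{u} #(Shrink.{v} A) := mk_congr_lift (equivShrink A)
    _ < lift.{u} (Order.succ (max ℵ₀ #(Shrink.{v} A))) :=
        Cardinal.lift_lt.2 (Order.lt_succ_of_le (le_max_right _ _))

theorem injective_eqOffSubmodule {X : Type v} {l : Filter X} {c : Cardinal.{v}}
    [CardinalInterFilter l c] (hA : ∀ I : Ideal A, lift.{v} I.spanRank < lift.{u} c)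
    {E F : ModuleCat.{v} A} [Injective E] [Injective F] (f : E →ₗ[A] F) {U : Set X} (hU : U ∈ l) :
    Injective (ModuleCat.of A (eqOffSubmodule f l U)) := by
  let P := ModuleCat.of A Πʳ _ : X, [F, (⊥ : Submodule A F)]_[l]
  have hF : Module.Baer A F :=
    .of_injective ((Module.injective_iff_injective_object A F).2 ‹Injective F›)
  have : Injective P := (Module.injective_iff_injective_object A P).1
    (baer_restrictedProduct hA (fun _ => hF) fun _ => baer_of_subsingleton).injective
  have : Injective (ModuleCat.of A (E × P)) := .of_iso (ModuleCat.biprodIsoProd E P) inferInstance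
  have retract : Retract (ModuleCat.of A (eqOffSubmodule f l U)) (ModuleCat.of A (E × P)) :=
    { i := ModuleCat.ofHom (eqOffSubmodule f l U).subtype
      r := ModuleCat.ofHom (eqOffProjection f hU)
      retract := ModuleCat.hom_ext (eqOffProjection_comp_subtype f hU) }
  exact retract.injective

end Injective

theorem every_module_is_inverse_limit_of_injectives_general (A : Type u) [Ring A] [Small.{v} A]
    (M : ModuleCat.{v} A) :
    ∃ (J : Type v) (_ : Preorder J) (_ : Nonempty J) (D : J ⥤ ModuleCat.{v} A),
      IsDirected J (· ≥ ·) ∧ (∀ j, Injective (D.obj j)) ∧ Nonempty (M ≅ limit D) := by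
  obtain ⟨E, F, i, f, w, _, _, _, hex⟩ := exists_mono_exact_injective M
  obtain ⟨c, hc, hA⟩ := exists_isRegular_forall_spanRank_lt.{u, v} A
  let l := cocardinal c.out hc
  have : l.NeBot := cocardinal_neBot hc (mk_out c).ge
  have hN : Monotone fun U : {U // U ∈ l} => eqOffSubmodule f.hom l U :=
    (eqOffSubmodule_mono f.hom l).comp (Subtype.mono_coe _)
  have : IsDirected {U // U ∈ l} (· ≥ ·) :=
    ⟨fun U V => ⟨⟨U ∩ V, inter_mem U.2 V.2⟩, Set.inter_subset_left, Set.inter_subset_right⟩⟩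
  let kernelIso := (equivIInfEqOffSubmodule ((ModuleCat.mono_iff_injective i).1 inferInstance)
    hex.moduleCat_range_eq_ker (l := l) (cocardinal_le_cofinite hc)).toModuleIso
  let limitIso := (isLimitIInfCone hN).conePointUniqueUpToIso (limit.isLimit _)
  exact ⟨{U // U ∈ l}, inferInstance, ⟨⟨Set.univ, univ_mem⟩⟩, submoduleDiagram hN, inferInstance,
    fun U => injective_eqOffSubmodule hA f.hom U.2, ⟨kernelIso ≪≫ limitIso⟩⟩

theorem every_module_is_inverse_limit_of_injectives (R : Type) [Ring R] (M : RMod R) :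
    Nonempty (InjectiveInverseLimitPresentation R M) := by
  obtain ⟨J, _, _, D, directed, inj, ⟨iso⟩⟩ :=
    every_module_is_inverse_limit_of_injectives_general Rᵐᵒᵖ M
  exact ⟨{ J, directed, D, inj, iso }⟩
end
end
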